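/- arXiv:1903.05698 — 6 statements merged into one kernel-verified Lean document; each statement's English description precedes it below -/
import Mathlib

section
/- For every x ∈ ℝ^n and y ∈ ℝ^m, the inconsistency equals the minimum of the restricted inconsistencies over all index sets of size m − q: inf{ (1/2)·Σ_{i=1}^m (y_i − H_i x + a_i)²/W_i : a ∈ ℝ^m with at most q nonzero entries } = min{ (1/2)·Σ_{i∈I} (y_i − H_i x)²/W_i : I ⊆ {1,…,m}, |I| = m − q }. In particular the infimum defining d_x(y) is attained. -/
/-- The inconsistency `d_x(y)`: infimum of `(1/2)·Σ_i (y_i − H_i x + a_i)²/W_i`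
over `q`-sparse vectors `a`. -/
noncomputable def dinc (m n q : ℕ) (H : Matrix (Fin m) (Fin n) ℝ) (W : Fin m → ℝ)
    (x : Fin n → ℝ) (y : Fin m → ℝ) : ℝ :=
  sInf { v : ℝ | ∃ a : Fin m → ℝ, (Function.support a).ncard ≤ q ∧
    v = (1 / 2 : ℝ) * ∑ i, (y i - (∑ j, H i j * x j) + a i) ^ 2 / W i }

/-- The restricted inconsistency `d_x(y, I) := (1/2)·Σ_{i∈I} (y_i − H_i x)²/W_i`. -/
noncomputable def dres (m n : ℕ) (H : Matrix (Fin m) (Fin n) ℝ) (W : Fin m → ℝ)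
    (x : Fin n → ℝ) (y : Fin m → ℝ) (I : Finset (Fin m)) : ℝ :=
  (1 / 2 : ℝ) * ∑ i ∈ I, (y i - (∑ j, H i j * x j)) ^ 2 / W i

/-!
A correction supported off `I` can cancel every residual outside `I`, so it achieves exactly the
loss restricted to `I`. Conversely, a `q`-sparse correction vanishes on some set of `m - q`
coordinates, whose uncorrected losses it still has to pay.
-/

section SparseCorrection

open Finset Function

variable {ι E R : Type*} [Fintype ι]

lemma ncard_support_indicator_compl_le [Zero E] (I : Finset ι) (f : ι → E) :
    (support ((I : Set ι)ᶜ.indicator f)).ncard ≤ Fintype.card ι - #I :=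
  calc (support ((I : Set ι)ᶜ.indicator f)).ncard
      ≤ ((I : Set ι)ᶜ).ncard := Set.ncard_le_ncard Set.support_indicator_subset
    _ = Fintype.card ι - #I := by
      rw [Set.ncard_compl, Set.ncard_coe_finset, Nat.card_eq_fintype_card]

lemma exists_card_eq_forall_eq_zero_of_ncard_support_le [Zero E] {q : ℕ} {a : ι → E}
    (ha : (support a).ncard ≤ q) :
    ∃ J : Finset ι, #J = Fintype.card ι - q ∧ ∀ i ∈ J, a i = 0 := by
  classical
  have card_zeros : Fintype.card ι - q ≤ #(support a).toFinsetᶜ := by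
    rw [card_compl, ← Set.ncard_eq_toFinset_card']
    exact Nat.sub_le_sub_left ha _
  obtain ⟨J, hJ_zeros, hJ_card⟩ := exists_subset_card_eq card_zeros
  exact ⟨J, hJ_card, fun i hi ↦ by simpa using hJ_zeros hi⟩

lemma exists_card_eq_forall_le [LinearOrder R] {k : ℕ} (hk : k ≤ Fintype.card ι)
    (f : Finset ι → R) :
    ∃ I : Finset ι, #I = k ∧ ∀ J : Finset ι, #J = k → f I ≤ f J := by
  simpa only [mem_powersetCard_univ] using
    exists_min_image (powersetCard k univ) f (powersetCard_nonempty.2 hk)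

lemma sum_loss_add_indicator_compl_neg [AddGroup E] [AddCommMonoid R] {ℓ : ι → E → R}
    (hℓ_zero : ∀ i, ℓ i 0 = 0) (r : ι → E) (I : Finset ι) :
    ∑ i, ℓ i (r i + (I : Set ι)ᶜ.indicator (-r) i) = ∑ i ∈ I, ℓ i (r i) := by
  rw [← sum_subset (subset_univ I) fun i _ hi ↦ by simp [hi, hℓ_zero]]
  exact sum_congr rfl fun i hi ↦ by simp [hi]

lemma sum_loss_le_sum_loss_add [AddZeroClass E] [AddCommMonoid R] [PartialOrder R]
    [IsOrderedAddMonoid R] {ℓ : ι → E → R} (hℓ_nonneg : ∀ i t, 0 ≤ ℓ i t) (r : ι → E)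
    {a : ι → E} {J : Finset ι} (ha : ∀ i ∈ J, a i = 0) :
    ∑ i ∈ J, ℓ i (r i) ≤ ∑ i, ℓ i (r i + a i) :=
  calc ∑ i ∈ J, ℓ i (r i)
      = ∑ i ∈ J, ℓ i (r i + a i) := sum_congr rfl fun i hi ↦ by rw [ha i hi, add_zero]
    _ ≤ ∑ i, ℓ i (r i + a i) :=
      sum_le_sum_of_subset_of_nonneg (subset_univ J) fun i _ _ ↦ hℓ_nonneg i _

/-- The total losses achievable by correcting the residual vector `r` in at most `q` coordinates,
where `ℓ i` is the loss incurred by the `i`-th corrected residual. The inconsistency `d_x(y)` is the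
infimum of this set for `r i = y i - H_i x` and `ℓ i t = t ^ 2 / (2 * W i)`. -/
def sparseLosses [Add E] [Zero E] [AddCommMonoid R] (ℓ : ι → E → R) (q : ℕ) (r : ι → E) : Set R :=
  {v | ∃ a : ι → E, (support a).ncard ≤ q ∧ v = ∑ i, ℓ i (r i + a i)}

lemma isLeast_sparseLosses [AddGroup E] [AddCommMonoid R] [PartialOrder R] [IsOrderedAddMonoid R]
    {ℓ : ι → E → R} (hℓ_nonneg : ∀ i t, 0 ≤ ℓ i t) (hℓ_zero : ∀ i, ℓ i 0 = 0)
    {q : ℕ} {r : ι → E} {I : Finset ι} (hI_card : #I = Fintype.card ι - q)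
    (hI_min : ∀ J : Finset ι, #J = Fintype.card ι - q → ∑ i ∈ I, ℓ i (r i) ≤ ∑ i ∈ J, ℓ i (r i)) :
    IsLeast (sparseLosses ℓ q r) (∑ i ∈ I, ℓ i (r i)) := by
  constructor
  · have sparse : (support ((I : Set ι)ᶜ.indicator (-r))).ncard ≤ q :=
      (ncard_support_indicator_compl_le I (-r)).trans (hI_card ▸ tsub_tsub_le)
    exact ⟨_, sparse, (sum_loss_add_indicator_compl_neg hℓ_zero r I).symm⟩
  · rintro _ ⟨a, ha, rfl⟩
    obtain ⟨J, hJ_card, hJ_zero⟩ := exists_card_eq_forall_eq_zero_of_ncard_support_le ha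
    exact (hI_min J hJ_card).trans (sum_loss_le_sum_loss_add hℓ_nonneg r hJ_zero)

theorem stmt_1_general [AddGroup E] [AddCommMonoid R] [ConditionallyCompleteLinearOrder R]
    [IsOrderedAddMonoid R] {ℓ : ι → E → R} (hℓ_nonneg : ∀ i t, 0 ≤ ℓ i t)
    (hℓ_zero : ∀ i, ℓ i 0 = 0) (q : ℕ) (r : ι → E) :
    (∃ I : Finset ι, #I = Fintype.card ι - q ∧
        sInf (sparseLosses ℓ q r) = ∑ i ∈ I, ℓ i (r i) ∧
        ∀ J : Finset ι, #J = Fintype.card ι - q → ∑ i ∈ I, ℓ i (r i) ≤ ∑ i ∈ J, ℓ i (r i)) ∧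
    ∃ a : ι → E, (support a).ncard ≤ q ∧
      sInf (sparseLosses ℓ q r) = ∑ i, ℓ i (r i + a i) := by
  obtain ⟨I, hI_card, hI_min⟩ :=
    exists_card_eq_forall_le (Nat.sub_le (Fintype.card ι) q) fun I ↦ ∑ i ∈ I, ℓ i (r i)
  have least := isLeast_sparseLosses hℓ_nonneg hℓ_zero hI_card hI_min
  exact ⟨⟨I, hI_card, least.csInf_eq, hI_min⟩, least.csInf_mem⟩

end SparseCorrection

/-- the inconsistency equals the minimum of the restricted
inconsistencies over index sets of size `m − q`, and the infimum defining
`d_x(y)` is attained. -/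
theorem stmt_1 (m n q : ℕ) (hm : 1 ≤ m) (hn : 1 ≤ n) (hq : q ≤ m)
    (H : Matrix (Fin m) (Fin n) ℝ) (W : Fin m → ℝ) (hW : ∀ i, 0 < W i)
    (x : Fin n → ℝ) (y : Fin m → ℝ) :
    (∃ I : Finset (Fin m), I.card = m - q ∧
        dinc m n q H W x y = dres m n H W x y I ∧
        ∀ J : Finset (Fin m), J.card = m - q →
          dres m n H W x y I ≤ dres m n H W x y J) ∧
    ∃ a : Fin m → ℝ, (Function.support a).ncard ≤ q ∧
      dinc m n q H W x y =
        (1 / 2 : ℝ) * ∑ i, (y i - (∑ j, H i j * x j) + a i) ^ 2 / W i := by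
  simpa only [dinc, dres, sparseLosses, Finset.mul_sum, Fintype.card_fin] using
    stmt_1_general (ℓ := fun i t ↦ 1 / 2 * (t ^ 2 / W i))
      (fun i t ↦ by have := hW i; positivity) (fun i ↦ by simp) q fun i ↦ y i - ∑ j, H i j * x j
end

section
/- For every y ∈ ℝ^m and φ ∈ ℝ, the sublevel set of the inconsistency is the union of the sublevel sets of the restricted inconsistencies over all index sets of size m − q: X(y,φ) = ⋃_{I ⊆ {1,…,m}, |I| = m−q} { x ∈ ℝ^n : d_x(y, I) ≤ φ }. -/
/-!
Entries of `a` outside its support leave the residuals unchanged, so a `q`-sparse correction costs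
at least as much as the uncorrected residuals on some `m - q` indices off the support. Conversely,
cancelling the residuals on the complement of a given `I` with `m - q` elements is a `q`-sparse
correction of cost exactly `d_x(y, I)`. As there are finitely many such `I`, the infimum is the
minimum of `d_x(y, I)` over them, and hence is at most `φ` iff one of these values is.
-/

section SparseCorrection

variable {ι G M : Type*} [Fintype ι] {q : ℕ}

theorem exists_card_eq_forall_mem_eq_zero [Zero G] {a : ι → G}
    (ha : (Function.support a).ncard ≤ q) :
    ∃ I : Finset ι, I.card = Fintype.card ι - q ∧ ∀ i ∈ I, a i = 0 := by
  classical
  have card_zeros : Fintype.card ι - q ≤ (Function.support a)ᶜ.toFinset.card := by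
    rw [← Set.ncard_eq_toFinset_card', Set.ncard_compl, Nat.card_eq_fintype_card]
    exact Nat.sub_le_sub_left ha _
  obtain ⟨I, I_subset, I_card⟩ := Finset.exists_subset_card_eq card_zeros
  exact ⟨I, I_card, fun i hi => by simpa using I_subset hi⟩

theorem exists_card_eq_sum_le_sum_add [AddZeroClass G] [AddCommMonoid M] [PartialOrder M]
    [IsOrderedAddMonoid M] {cost : ι → G → M} (cost_nonneg : ∀ i g, 0 ≤ cost i g)
    (r : ι → G) {a : ι → G} (ha : (Function.support a).ncard ≤ q) :
    ∃ I : Finset ι, I.card = Fintype.card ι - q ∧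
      ∑ i ∈ I, cost i (r i) ≤ ∑ i, cost i (r i + a i) := by
  obtain ⟨I, I_card, a_eq_zero⟩ := exists_card_eq_forall_mem_eq_zero ha
  refine ⟨I, I_card, ?_⟩
  calc ∑ i ∈ I, cost i (r i)
      = ∑ i ∈ I, cost i (r i + a i) :=
        Finset.sum_congr rfl fun i hi => by rw [a_eq_zero i hi, add_zero]
    _ ≤ ∑ i, cost i (r i + a i) :=
        Finset.sum_le_univ_sum_of_nonneg fun i => cost_nonneg i _

theorem exists_ncard_support_le_sum_add_eq [AddGroup G] [AddCommMonoid M]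
    {cost : ι → G → M} (cost_zero : ∀ i, cost i 0 = 0) (r : ι → G) {I : Finset ι}
    (hI : Fintype.card ι - q ≤ I.card) :
    ∃ a : ι → G, (Function.support a).ncard ≤ q ∧
      ∑ i, cost i (r i + a i) = ∑ i ∈ I, cost i (r i) := by
  classical
  refine ⟨I.piecewise 0 (-r), ?_, ?_⟩
  · have support_subset : Function.support (I.piecewise 0 (-r)) ⊆ (Iᶜ : Finset ι) := by
      intro i hi
      rw [Finset.mem_coe, Finset.mem_compl]
      exact fun mem_I => hi (by simp [mem_I])
    calc (Function.support (I.piecewise 0 (-r))).ncard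
        ≤ (Iᶜ : Finset ι).card := by
          simpa only [Set.ncard_coe_finset] using Set.ncard_le_ncard support_subset
      _ ≤ q := by rw [Finset.card_compl]; omega
  · symm
    apply Finset.sum_subset_zero_on_sdiff (Finset.subset_univ I)
    · intro i hi
      have not_mem_I : i ∉ I := (Finset.mem_sdiff.mp hi).2
      simp [not_mem_I, cost_zero]
    · intro i hi
      simp [hi]

end SparseCorrection

section Inconsistency

variable {m n q : ℕ} {W : Fin m → ℝ}

theorem dinc_le_dres (hW : ∀ i, 0 ≤ W i) (H : Matrix (Fin m) (Fin n) ℝ) (x : Fin n → ℝ)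
    (y : Fin m → ℝ) {I : Finset (Fin m)} (hI : m - q ≤ I.card) :
    dinc m n q H W x y ≤ dres m n H W x y I := by
  obtain ⟨a, ha, sum_eq⟩ := exists_ncard_support_le_sum_add_eq (q := q)
    (cost := fun i t => t ^ 2 / W i) (by simp) (fun i => y i - ∑ j, H i j * x j)
    (by rwa [Fintype.card_fin])
  refine csInf_le ⟨0, ?_⟩ ⟨a, ha, congrArg ((1 / 2 : ℝ) * ·) sum_eq.symm⟩
  rintro _ ⟨b, -, rfl⟩
  exact mul_nonneg (by norm_num)
    (Finset.sum_nonneg fun i _ => div_nonneg (sq_nonneg _) (hW i))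

theorem exists_card_eq_dres_le_dinc (hW : ∀ i, 0 ≤ W i) (H : Matrix (Fin m) (Fin n) ℝ)
    (x : Fin n → ℝ) (y : Fin m → ℝ) :
    ∃ I : Finset (Fin m), I.card = m - q ∧ dres m n H W x y I ≤ dinc m n q H W x y := by
  have nonempty : (Finset.powersetCard (m - q) (Finset.univ : Finset (Fin m))).Nonempty :=
    Finset.powersetCard_nonempty_of_le (by simp)
  obtain ⟨I, hI, I_min⟩ := Finset.exists_min_image _ (dres m n H W x y) nonempty
  refine ⟨I, Finset.mem_powersetCard_univ.mp hI, le_csInf ⟨_, 0, by simp, rfl⟩ ?_⟩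
  rintro _ ⟨a, ha, rfl⟩
  obtain ⟨J, J_card, sum_le⟩ := exists_card_eq_sum_le_sum_add
    (cost := fun i t => t ^ 2 / W i) (fun i t => div_nonneg (sq_nonneg t) (hW i))
    (fun i => y i - ∑ j, H i j * x j) ha
  rw [Fintype.card_fin] at J_card
  calc dres m n H W x y I
      ≤ dres m n H W x y J := I_min J (Finset.mem_powersetCard_univ.mpr J_card)
    _ ≤ (1 / 2 : ℝ) * ∑ i, (y i - (∑ j, H i j * x j) + a i) ^ 2 / W i :=
        mul_le_mul_of_nonneg_left sum_le (by norm_num)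

end Inconsistency

/-- the sublevel set `X(y,φ)` of the inconsistency equals the union
of the sublevel sets of the restricted inconsistencies over index sets of size
`m − q`. -/
theorem stmt_2 (m n q : ℕ) (hm : 1 ≤ m) (hn : 1 ≤ n) (hq : q ≤ m)
    (H : Matrix (Fin m) (Fin n) ℝ) (W : Fin m → ℝ) (hW : ∀ i, 0 < W i)
    (y : Fin m → ℝ) (φ : ℝ) :
    { x : Fin n → ℝ | dinc m n q H W x y ≤ φ } =
      ⋃ I ∈ { I : Finset (Fin m) | I.card = m - q },
        { x : Fin n → ℝ | dres m n H W x y I ≤ φ } := by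
  have hW_nonneg : ∀ i, 0 ≤ W i := fun i => (hW i).le
  ext x
  simp only [Set.mem_ofPred_eq, Set.mem_iUnion, exists_prop]
  constructor
  · intro dinc_le
    obtain ⟨I, I_card, dres_le⟩ := exists_card_eq_dres_le_dinc hW_nonneg H x y
    exact ⟨I, I_card, dres_le.trans dinc_le⟩
  · rintro ⟨I, I_card, dres_le⟩
    exact (dinc_le_dres hW_nonneg H x y I_card.ge).trans dres_le
end

section
/- Consider the homogeneous scalar case: n = 1, H_i = 1 for all i, and W_i = W/2 for all i with W > 0, and assume 2q < m. Then for every y ∈ ℝ^m and every x ∈ ℝ: d_x(y) ≥ (m − 2q)·(x − trim(y))²/W, where d_x(y) = inf{ Σ_{i=1}^m (y_i − x + a_i)²/W : a ∈ ℝ^m with at most q nonzero entries }. -/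
/-!
Shift the sorted data by `x` and let `S` be the set of uncorrupted positions, so that at most `q`
positions lie outside `S`. The positions kept by the trimmed mean have `q` positions above them and
`q` below. Hence each corrupted kept position can be exchanged for its own uncorrupted position
above, which can only increase the sum over the kept positions, or for one below, which can only
decrease it. Choosing the direction by the sign of the sum produces a subset of `S` of the same
size whose sum is at least as large in absolute value, and Cauchy–Schwarz on that subset bounds the
square of the sum by the residual on `S`, where the corruption vanishes.
-/

open Finset

section Exchange

variable {ι κ M : Type*}

theorem sum_le_sum_of_card_eq_of_forall_le [AddCommMonoid M] [PartialOrder M]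
    [IsOrderedAddMonoid M] {s : Finset ι} {t : Finset κ} {f : ι → M} {g : κ → M}
    (hcard : #s = #t) (hle : ∀ i ∈ s, ∀ j ∈ t, f i ≤ g j) :
    ∑ i ∈ s, f i ≤ ∑ j ∈ t, g j := by
  rw [← sum_coe_sort s f, ← sum_coe_sort t g, ← (equivOfCardEq hcard).sum_comp]
  exact sum_le_sum fun i _ => hle _ i.2 _ (equivOfCardEq hcard i).2

variable [DecidableEq ι] {S T L H : Finset ι} {f : ι → M}

theorem card_sdiff_le_card_inter_of_card_compl_le [Fintype ι] (hTH : Disjoint T H)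
    (hS : #Sᶜ ≤ #H) : #(T \ S) ≤ #(H ∩ S) := by
  have hsplit : #(H ∩ S) + #(H \ S) = #H := card_inter_add_card_sdiff H S
  have hcompl : #(T \ S) + #(H \ S) ≤ #Sᶜ := by
    rw [← card_union_of_disjoint (hTH.mono sdiff_subset sdiff_subset), ← union_sdiff_distrib]
    exact card_le_card fun i hi => mem_compl.2 (mem_sdiff.1 hi).2
  lia

theorem exists_subset_card_eq_sum_le [AddCommMonoid M] [PartialOrder M] [IsOrderedAddMonoid M]
    (hTH : Disjoint T H) (hcard : #(T \ S) ≤ #(H ∩ S)) (hle : ∀ i ∈ T, ∀ j ∈ H, f i ≤ f j) :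
    ∃ U ⊆ S, #U = #T ∧ ∑ i ∈ T, f i ≤ ∑ i ∈ U, f i := by
  obtain ⟨R, hR, hRcard⟩ := exists_subset_card_eq hcard
  have hRH : R ⊆ H := hR.trans inter_subset_left
  have hdisj : Disjoint (T ∩ S) R := hTH.mono inter_subset_left hRH
  have hswap : ∑ i ∈ T \ S, f i ≤ ∑ i ∈ R, f i :=
    sum_le_sum_of_card_eq_of_forall_le hRcard.symm fun i hi j hj =>
      hle i (sdiff_subset hi) j (hRH hj)
  refine ⟨(T ∩ S) ∪ R, union_subset inter_subset_right (hR.trans inter_subset_right), ?_, ?_⟩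
  · rw [card_union_of_disjoint hdisj, hRcard, card_inter_add_card_sdiff]
  · rw [sum_union hdisj, ← sum_inter_add_sum_sdiff T S f]
    gcongr

theorem exists_subset_card_eq_abs_sum_le [AddCommGroup M] [LinearOrder M] [IsOrderedAddMonoid M]
    (hTL : Disjoint T L) (hTH : Disjoint T H)
    (hL : #(T \ S) ≤ #(L ∩ S)) (hH : #(T \ S) ≤ #(H ∩ S))
    (hleL : ∀ i ∈ T, ∀ j ∈ L, f j ≤ f i) (hleH : ∀ i ∈ T, ∀ j ∈ H, f i ≤ f j) :
    ∃ U ⊆ S, #U = #T ∧ |∑ i ∈ T, f i| ≤ |∑ i ∈ U, f i| := by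
  rcases le_total 0 (∑ i ∈ T, f i) with hsum | hsum
  · obtain ⟨U, hUS, hU, hle⟩ := exists_subset_card_eq_sum_le hTH hH hleH
    exact ⟨U, hUS, hU, abs_le_abs_of_nonneg hsum hle⟩
  · obtain ⟨U, hUS, hU, hle⟩ := exists_subset_card_eq_sum_le (f := -f) hTL hL
      fun i hi j hj => neg_le_neg (hleL i hi j hj)
    simp only [Pi.neg_apply, sum_neg_distrib, neg_le_neg_iff] at hle
    exact ⟨U, hUS, hU, abs_le_abs_of_nonpos hsum hle⟩

theorem sq_sum_le_card_mul_sum_sq_of_card_sdiff_le {R : Type*} [CommRing R] [LinearOrder R]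
    [IsStrictOrderedRing R] {f : ι → R} (hTL : Disjoint T L) (hTH : Disjoint T H)
    (hL : #(T \ S) ≤ #(L ∩ S)) (hH : #(T \ S) ≤ #(H ∩ S))
    (hleL : ∀ i ∈ T, ∀ j ∈ L, f j ≤ f i) (hleH : ∀ i ∈ T, ∀ j ∈ H, f i ≤ f j) :
    (∑ i ∈ T, f i) ^ 2 ≤ #T * ∑ i ∈ S, f i ^ 2 := by
  obtain ⟨U, hUS, hU, hle⟩ := exists_subset_card_eq_abs_sum_le hTL hTH hL hH hleL hleH
  calc (∑ i ∈ T, f i) ^ 2 ≤ (∑ i ∈ U, f i) ^ 2 := sq_le_sq.2 hle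
    _ ≤ #U * ∑ i ∈ U, f i ^ 2 := sq_sum_le_card_mul_sum_sq
    _ ≤ #T * ∑ i ∈ S, f i ^ 2 := by
      rw [hU]
      gcongr

end Exchange

theorem card_mul_sq_sub_mean {ι K : Type*} [Field K] {s : Finset ι} (hs : (#s : K) ≠ 0)
    (f : ι → K) (x : K) :
    #s * (x - 1 / #s * ∑ i ∈ s, f i) ^ 2 = (∑ i ∈ s, (f i - x)) ^ 2 / #s := by
  rw [sum_sub_distrib, sum_const, nsmul_eq_mul]
  field_simp
  ring

theorem ncard_support_comp_equiv {α β M : Type*} [Zero M] (e : α ≃ β) (a : β → M) :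
    (Function.support (a ∘ e)).ncard = (Function.support a).ncard := by
  rw [Function.support_comp_eq_preimage, ← e.image_symm_eq_preimage,
    Set.ncard_image_of_injective _ e.symm.injective]

/-- The positions, counted from `0`, that survive when the `q` lowest and the `q` highest of `m`
positions are discarded. -/
def trimmedIndices (m q : ℕ) : Finset (Fin m) :=
  univ.filter fun i => q ≤ (i : ℕ) ∧ (i : ℕ) < m - q

/-- The `q`-trimmed mean of a family listed in increasing order. The entries are not sorted here:
for unsorted data, apply it to a monotone rearrangement. -/
noncomputable def trimmedMean {m : ℕ} (q : ℕ) (y : Fin m → ℝ) : ℝ :=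
  1 / (m - 2 * q : ℝ) * ∑ i ∈ trimmedIndices m q, y i

section Trimmed

variable {m q : ℕ}

theorem card_filter_le_val (k : ℕ) : #{i : Fin m | k ≤ (i : ℕ)} = m - k := by
  have hsplit := card_filter_add_card_filter_not (s := (univ : Finset (Fin m))) fun i => (i : ℕ) < k
  simp only [not_lt, Fin.card_filter_val_lt, card_univ, Fintype.card_fin] at hsplit
  lia

theorem card_trimmedIndices : #(trimmedIndices m q) = m - 2 * q := by
  have himage : (trimmedIndices m q).map Fin.valEmbedding = Ico q (m - q) := by
    ext k
    simp only [trimmedIndices, mem_map, mem_filter_univ, Fin.valEmbedding_apply, mem_Ico]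
    exact ⟨by rintro ⟨i, hi, rfl⟩; exact hi, fun hk => ⟨⟨k, by lia⟩, hk, rfl⟩⟩
  rw [← card_map, himage, Nat.card_Ico]
  lia

theorem sq_sum_trimmedIndices_le {R : Type*} [CommRing R] [LinearOrder R]
    [IsStrictOrderedRing R] {z : Fin m → R} (hz : Monotone z) {S : Finset (Fin m)}
    (hS : #Sᶜ ≤ q) :
    (∑ i ∈ trimmedIndices m q, z i) ^ 2 ≤ #(trimmedIndices m q) * ∑ i ∈ S, z i ^ 2 := by
  let L : Finset (Fin m) := univ.filter fun i => (i : ℕ) < q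
  let H : Finset (Fin m) := univ.filter fun i => m - q ≤ (i : ℕ)
  have hTL : Disjoint (trimmedIndices m q) L := disjoint_filter.2 fun i _ hT => by lia
  have hTH : Disjoint (trimmedIndices m q) H := disjoint_filter.2 fun i _ hT => by lia
  have hSm : #Sᶜ ≤ m := by simpa using card_le_univ Sᶜ
  have hL : #Sᶜ ≤ #L := (le_min hSm hS).trans_eq Fin.card_filter_val_lt.symm
  have hH : #Sᶜ ≤ #H := by
    rw [card_filter_le_val]
    lia
  refine sq_sum_le_card_mul_sum_sq_of_card_sdiff_le hTL hTH
    (card_sdiff_le_card_inter_of_card_compl_le hTL hL)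
    (card_sdiff_le_card_inter_of_card_compl_le hTH hH)
    (fun i hi j hj => hz ?_) fun i hi j hj => hz ?_
  all_goals
    simp only [trimmedIndices, L, H, mem_filter_univ] at hi hj
    lia

theorem mul_sq_sub_trimmedMean_le (hq : 2 * q < m) {y : Fin m → ℝ} (hy : Monotone y)
    {a : Fin m → ℝ} (ha : (Function.support a).ncard ≤ q) (x : ℝ) :
    (m - 2 * q : ℝ) * (x - trimmedMean q y) ^ 2 ≤ ∑ i, (y i - x + a i) ^ 2 := by
  have hcard : (m - 2 * q : ℝ) = #(trimmedIndices m q) := by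
    rw [card_trimmedIndices, Nat.cast_sub hq.le, Nat.cast_mul, Nat.cast_ofNat]
  have hpos : (0 : ℝ) < #(trimmedIndices m q) := by
    rw [card_trimmedIndices, Nat.cast_pos]
    lia
  let S : Finset (Fin m) := univ.filter fun i => a i = 0
  have hS : #Sᶜ ≤ q := by
    rw [← Set.ncard_coe_finset]
    convert ha
    ext i
    simp [S]
  have hSq := sq_sum_trimmedIndices_le (fun i j hij => sub_le_sub_right (hy hij) x) hS
  rw [trimmedMean, hcard, card_mul_sq_sub_mean hpos.ne', div_le_iff₀' hpos]
  refine hSq.trans ?_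
  gcongr
  calc ∑ i ∈ S, (y i - x) ^ 2 = ∑ i ∈ S, (y i - x + a i) ^ 2 :=
        sum_congr rfl fun i hi => by rw [(mem_filter_univ i).1 hi, add_zero]
    _ ≤ ∑ i, (y i - x + a i) ^ 2 :=
        sum_le_univ_sum_of_nonneg fun i => sq_nonneg _

end Trimmed

/-- homogeneous scalar case. With `H_i = 1`, `W_i = W/2`, the
inconsistency `d_x(y) = inf { Σ (y_i − x + a_i)²/W : a q-sparse }` is bounded
below by `(m − 2q)·(x − trim(y))²/W`, where `trim(y)` is the trimmed mean of
the entries of `y` (discarding the `q` largest and `q` smallest ones). The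
sorted entries of `y` are given via a monotone rearrangement `y ∘ σ`. -/
theorem stmt_11 (m q : ℕ) (hq : 2 * q < m) (W : ℝ) (hW : 0 < W)
    (y : Fin m → ℝ) (x : ℝ)
    (σ : Equiv.Perm (Fin m)) (hσ : Monotone fun i => y (σ i)) :
    sInf { v : ℝ | ∃ a : Fin m → ℝ, (Function.support a).ncard ≤ q ∧
        v = ∑ i, (y i - x + a i) ^ 2 / W } ≥
      (m - 2 * q : ℝ) *
        (x - (1 / (m - 2 * q : ℝ)) *
          ∑ i ∈ Finset.univ.filter (fun i : Fin m => q ≤ (i : ℕ) ∧ (i : ℕ) < m - q),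
            y (σ i)) ^ 2 / W := by
  refine le_csInf ⟨_, 0, by simp, rfl⟩ ?_
  rintro _ ⟨a, ha, rfl⟩
  rw [← sum_div, ← Equiv.sum_comp σ fun i => (y i - x + a i) ^ 2]
  gcongr
  exact mul_sq_sub_trimmedMean_le hq hσ ((ncard_support_comp_equiv σ a).trans_le ha) x
end

section
/- Let m and q be integers with 2q ≤ m, let y ∈ ℝ^m, and let x ∈ ℝ. Then for every index set I ⊆ {1,…,m} with |I| = m − q: Σ_{i∈I} (y_i − x)² ≥ Σ_{i=q+1}^{m−q} (y_[i] − x)², where y_[1] ≤ y_[2] ≤ … ≤ y_[m] are the entries of y sorted in increasing order. That is, the sum of squared residuals over any (m−q)-subset of the coordinates dominates the sum of squared residuals over the middle m − 2q order statistics of y. -/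
/-!
Sort `y` and call `D` the set of the (at most `q`) positions left out of `I`. The loss
`(y_[i] - x)²` is antitone in the position `i` as long as `y_[i] ≤ x`, and monotone afterwards. On
the antitone part the first `q` positions carry the largest losses, so deleting them leaves no more
than deleting `D` does; on the monotone part the same holds for the last `q` positions. Deleting
both the first and the last `q` positions therefore leaves no more than deleting `D`.
-/

open Finset

section ExchangeInequalities

variable {ι κ M : Type*} [AddCommMonoid M] [PartialOrder M] [IsOrderedAddMonoid M]

theorem sum_le_sum_of_card_le_of_forall_le {s : Finset ι} {t : Finset κ} {f : ι → M} {g : κ → M}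
    (hcard : #s ≤ #t) (hfg : ∀ i ∈ s, ∀ j ∈ t, f i ≤ g j) (hg : ∀ j ∈ t, 0 ≤ g j) :
    ∑ i ∈ s, f i ≤ ∑ j ∈ t, g j := by
  obtain ⟨e⟩ : Nonempty (s ↪ t) := Function.Embedding.nonempty_of_card_le (by simpa using hcard)
  calc ∑ i ∈ s, f i = ∑ i : s, f i := (sum_coe_sort s f).symm
    _ ≤ ∑ i : s, g (e i) := sum_le_sum fun i _ => hfg i i.2 (e i) (e i).2
    _ = ∑ j ∈ univ.map e, g j := (sum_map univ e fun j : t => g j).symm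
    _ ≤ ∑ j : t, g j := sum_le_univ_sum_of_nonneg fun j => hg j j.2
    _ = ∑ j ∈ t, g j := sum_coe_sort t g

variable [DecidableEq ι] {f : ι → M}

theorem sum_le_sum_of_card_le_of_forall_sdiff_le {s t : Finset ι} (hcard : #s ≤ #t)
    (hle : ∀ i ∈ s \ t, ∀ j ∈ t \ s, f i ≤ f j) (hf : ∀ j ∈ t \ s, 0 ≤ f j) :
    ∑ i ∈ s, f i ≤ ∑ j ∈ t, f j := by
  have hsdiff : ∑ i ∈ s \ t, f i ≤ ∑ j ∈ t \ s, f j :=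
    sum_le_sum_of_card_le_of_forall_le (card_sdiff_le_card_sdiff_iff.mpr hcard) hle hf
  calc ∑ i ∈ s, f i = ∑ i ∈ s ∩ t, f i + ∑ i ∈ s \ t, f i := (sum_inter_add_sum_sdiff s t f).symm
    _ ≤ ∑ i ∈ t ∩ s, f i + ∑ j ∈ t \ s, f j := by rw [inter_comm]; gcongr
    _ = ∑ j ∈ t, f j := sum_inter_add_sum_sdiff t s f

theorem sum_sdiff_le_sum_sdiff_of_card_le {s A D : Finset ι} (hcard : #D ≤ #A)
    (hsA : s ⊆ A ∨ A ⊆ s) (hle : ∀ i ∈ s \ A, ∀ j ∈ s ∩ A, f i ≤ f j)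
    (hf : ∀ j ∈ s, 0 ≤ f j) : ∑ i ∈ s \ A, f i ≤ ∑ i ∈ s \ D, f i := by
  rcases hsA with hsA | hAs
  · rw [sdiff_eq_empty_iff_subset.mpr hsA, sum_empty]
    exact sum_nonneg fun j hj => hf j (mem_sdiff.mp hj).1
  · have hcard_sdiff : #(s \ A) ≤ #(s \ D) := by
      have := card_sdiff_of_subset hAs
      have := le_card_sdiff D s
      omega
    refine sum_le_sum_of_card_le_of_forall_sdiff_le hcard_sdiff ?_ ?_
    · exact fun i hi j hj => hle i (by grind) j (by grind)
    · exact fun j hj => hf j (by grind)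

end ExchangeInequalities

section Trimming

variable {ι M : Type*} [LinearOrder ι] [AddCommMonoid M] [PartialOrder M] [IsOrderedAddMonoid M]
  {f : ι → M}

theorem sum_sdiff_le_sum_sdiff_of_antitoneOn {L A D : Finset ι} (hL : IsLowerSet (L : Set ι))
    (hA : IsLowerSet (A : Set ι)) (hcard : #D ≤ #A) (hanti : AntitoneOn f L)
    (hf : ∀ i ∈ L, 0 ≤ f i) : ∑ i ∈ L \ A, f i ≤ ∑ i ∈ L \ D, f i := by
  refine sum_sdiff_le_sum_sdiff_of_card_le hcard (by exact_mod_cast hL.total hA) ?_ hf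
  intro i hi j hj
  obtain ⟨hiL, hiA⟩ := mem_sdiff.mp hi
  obtain ⟨hjL, hjA⟩ := mem_inter.mp hj
  have hji : j ≤ i := le_of_not_ge fun hij => hiA (hA hij hjA)
  exact hanti hjL hiL hji

theorem sum_sdiff_le_sum_sdiff_of_monotoneOn {U B D : Finset ι} (hU : IsUpperSet (U : Set ι))
    (hB : IsUpperSet (B : Set ι)) (hcard : #D ≤ #B) (hmono : MonotoneOn f U)
    (hf : ∀ i ∈ U, 0 ≤ f i) : ∑ i ∈ U \ B, f i ≤ ∑ i ∈ U \ D, f i :=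
  sum_sdiff_le_sum_sdiff_of_antitoneOn (ι := ιᵒᵈ) hU.toDual hB.toDual hcard hmono.dual_left hf

theorem sum_compl_union_le_sum_compl [Fintype ι] {L A B D : Finset ι}
    (hL : IsLowerSet (L : Set ι)) (hA : IsLowerSet (A : Set ι)) (hB : IsUpperSet (B : Set ι))
    (hDA : #D ≤ #A) (hDB : #D ≤ #B) (hanti : AntitoneOn f L) (hmono : MonotoneOn f (Lᶜ : Set ι))
    (hf : ∀ i, 0 ≤ f i) : ∑ i ∈ (A ∪ B)ᶜ, f i ≤ ∑ i ∈ Dᶜ, f i := by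
  have hlower : ∑ i ∈ L \ A, f i ≤ ∑ i ∈ L \ D, f i :=
    sum_sdiff_le_sum_sdiff_of_antitoneOn hL hA hDA hanti fun i _ => hf i
  have hupper : ∑ i ∈ Lᶜ \ B, f i ≤ ∑ i ∈ Lᶜ \ D, f i := by
    rw [← coe_compl] at hmono
    exact sum_sdiff_le_sum_sdiff_of_monotoneOn (by simpa only [coe_compl] using hL.compl) hB hDB
      hmono fun i _ => hf i
  have hsubset : (A ∪ B)ᶜ ⊆ L \ A ∪ Lᶜ \ B := by grind [mem_compl]
  have hdisjoint (S T : Finset ι) : Disjoint (L \ S) (Lᶜ \ T) :=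
    disjoint_compl_right.mono sdiff_le sdiff_le
  calc ∑ i ∈ (A ∪ B)ᶜ, f i ≤ ∑ i ∈ L \ A ∪ Lᶜ \ B, f i :=
        sum_le_sum_of_subset_of_nonneg hsubset fun i _ _ => hf i
    _ = ∑ i ∈ L \ A, f i + ∑ i ∈ Lᶜ \ B, f i := sum_union (hdisjoint A B)
    _ ≤ ∑ i ∈ L \ D, f i + ∑ i ∈ Lᶜ \ D, f i := add_le_add hlower hupper
    _ = ∑ i ∈ L \ D ∪ Lᶜ \ D, f i := (sum_union (hdisjoint D D)).symm
    _ = ∑ i ∈ Dᶜ, f i := by rw [← union_sdiff_distrib, union_compl, compl_eq_univ_sdiff]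

theorem sum_middle_le_sum {m q : ℕ} {f : Fin m → M} {L J : Finset (Fin m)}
    (hL : IsLowerSet (L : Set (Fin m))) (hanti : AntitoneOn f L)
    (hmono : MonotoneOn f (Lᶜ : Set (Fin m))) (hf : ∀ i, 0 ≤ f i) (hJ : m ≤ #J + q) :
    ∑ i ∈ univ.filter (fun i : Fin m => q ≤ (i : ℕ) ∧ (i : ℕ) < m - q), f i ≤ ∑ i ∈ J, f i := by
  let first : Finset (Fin m) := {i | (i : ℕ) < q}
  let last : Finset (Fin m) := ({i | (i : ℕ) < m - q} : Finset (Fin m))ᶜ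
  have hfirst : IsLowerSet (first : Set (Fin m)) := fun i j hji hi => by
    simp only [first, coe_filter_univ, Set.mem_ofPred_eq] at hi ⊢
    omega
  have hlast : IsUpperSet (last : Set (Fin m)) := fun i j hij hi => by
    simp only [last, mem_coe, mem_compl, mem_filter_univ] at hi ⊢
    omega
  have hcard_first : #Jᶜ ≤ #first := by
    rw [card_compl, Fintype.card_fin, Fin.card_filter_val_lt]
    omega
  have hcard_last : #Jᶜ ≤ #last := by
    rw [card_compl, card_compl, Fintype.card_fin, Fin.card_filter_val_lt]
    omega
  have hmiddle : univ.filter (fun i : Fin m => q ≤ (i : ℕ) ∧ (i : ℕ) < m - q) =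
      (first ∪ last)ᶜ := by
    ext i
    simp only [first, last, mem_filter_univ, compl_union, compl_compl, mem_inter, mem_compl,
      not_lt]
  rw [hmiddle, ← compl_compl J]
  exact sum_compl_union_le_sum_compl hL hfirst hlast hcard_first hcard_last hanti hmono hf

end Trimming

section SquaredDistance

variable {R : Type*} [CommRing R] [LinearOrder R] [IsStrictOrderedRing R]

theorem antitoneOn_sub_sq (x : R) : AntitoneOn (fun a => (a - x) ^ 2) (Set.Iic x) :=
  fun a _ b hb hab => by nlinarith [Set.mem_Iic.mp hb]

theorem monotoneOn_sub_sq (x : R) : MonotoneOn (fun a => (a - x) ^ 2) (Set.Ici x) :=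
  fun a ha b _ hab => by nlinarith [Set.mem_Ici.mp ha]

end SquaredDistance

theorem stmt_12_general {α M : Type*} [LinearOrder α] [AddCommMonoid M] [PartialOrder M]
    [IsOrderedAddMonoid M] {m q : ℕ} {y : Fin m → α} {x : α} {σ : Equiv.Perm (Fin m)}
    (hσ : Monotone fun i => y (σ i)) {loss : α → M} (hanti : AntitoneOn loss (Set.Iic x))
    (hmono : MonotoneOn loss (Set.Ici x)) (hloss : ∀ a, 0 ≤ loss a)
    {I : Finset (Fin m)} (hI : m ≤ #I + q) :
    ∑ i ∈ univ.filter (fun i : Fin m => q ≤ (i : ℕ) ∧ (i : ℕ) < m - q), loss (y (σ i)) ≤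
      ∑ i ∈ I, loss (y i) := by
  let L : Finset (Fin m) := {i | y (σ i) ≤ x}
  have hL : IsLowerSet (L : Set (Fin m)) := by
    rw [coe_filter_univ]
    exact (isLowerSet_Iic x).preimage hσ
  have hantiL : AntitoneOn (fun i => loss (y (σ i))) L :=
    hanti.comp_MonotoneOn (hσ.monotoneOn _) fun i hi => by simpa [L] using hi
  have hmonoL : MonotoneOn (fun i => loss (y (σ i))) (Lᶜ : Set (Fin m)) :=
    hmono.comp (hσ.monotoneOn _) fun i hi => by
      have hxi : x < y (σ i) := by simpa [L] using hi
      exact hxi.le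
  calc ∑ i ∈ univ.filter (fun i : Fin m => q ≤ (i : ℕ) ∧ (i : ℕ) < m - q), loss (y (σ i))
      ≤ ∑ i ∈ I.map σ.symm.toEmbedding, loss (y (σ i)) :=
        sum_middle_le_sum hL hantiL hmonoL (fun _ => hloss _) (by rwa [card_map])
    _ = ∑ i ∈ I, loss (y i) := by simp [sum_map]

/-- for any index set `I` of cardinality `m − q`, the sum of
squared residuals over `I` dominates the sum of squared residuals over the
middle `m − 2q` order statistics of `y` (given via a monotone rearrangement
`y ∘ σ`; the `i`-th smallest entry, 1-indexed, is `y (σ ⟨i−1⟩)`). -/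
theorem stmt_12 (m q : ℕ) (hq : 2 * q ≤ m) (y : Fin m → ℝ) (x : ℝ)
    (σ : Equiv.Perm (Fin m)) (hσ : Monotone fun i => y (σ i)) :
    ∀ I : Finset (Fin m), I.card = m - q →
      ∑ i ∈ I, (y i - x) ^ 2 ≥
        ∑ i ∈ Finset.univ.filter (fun i : Fin m => q ≤ (i : ℕ) ∧ (i : ℕ) < m - q),
          (y (σ i) - x) ^ 2 := by
  exact fun I hI => stmt_12_general (I := I) (q := q) hσ (antitoneOn_sub_sq x) (monotoneOn_sub_sq x)
    (fun a => sq_nonneg (a - x)) (by omega)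
end

section
/- Let n ≥ 1, let δ > 0, and let μ be a Borel probability measure on ℝ^n. Call a point x ∈ ℝ^n δ-typical if μ(B̄_δ(x)) > n/(n+1), where B̄_δ(x) is the closed Euclidean ball of radius δ centered at x, and let T_δ(μ) := { x ∈ ℝ^n : x is δ-typical }. Then there exists x* ∈ ℝ^n such that T_δ(μ) ⊆ B̄_δ(x*). -/
open MeasureTheory

/-!
At most `d + 1` events whose complements each have probability less than `1 / (d + 1)` occur
simultaneously with positive probability. Hence any `d + 1` compact convex sets of measure more than
`d / (d + 1)` meet, and by Helly's theorem they all share a point. For the closed balls of radius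
`δ` around the typical points, such a point is within `δ` of every typical point.
-/

open Module

section BiInter

variable {α ι : Type*} [MeasurableSpace α] {μ : Measure α} {I : Finset ι} {s : ι → Set α}

theorem measure_biInter_finset_pos_of_sum_compl_lt (h : ∑ i ∈ I, μ (s i)ᶜ < μ Set.univ) :
    0 < μ (⋂ i ∈ I, s i) := by
  by_contra! hnull
  refine h.not_ge ?_
  calc μ Set.univ
      ≤ μ (⋂ i ∈ I, s i) + μ (⋂ i ∈ I, s i)ᶜ := by
        simpa only [Set.union_compl_self] using measure_union_le (⋂ i ∈ I, s i) (⋂ i ∈ I, s i)ᶜ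
    _ = μ (⋃ i ∈ I, (s i)ᶜ) := by simp only [nonpos_iff_eq_zero.1 hnull, zero_add, Set.compl_iInter]
    _ ≤ ∑ i ∈ I, μ (s i)ᶜ := measure_biUnion_finset_le I _

theorem prob_biInter_finset_pos_of_div_add_one_lt [IsProbabilityMeasure μ] {k : ℕ}
    (hI : I.card ≤ k + 1) (hs : ∀ i ∈ I, MeasurableSet (s i))
    (hμ : ∀ i ∈ I, (k : ENNReal) / (k + 1) < μ (s i)) :
    0 < μ (⋂ i ∈ I, s i) := by
  have one_sub_eq : 1 - (k : ENNReal) / (k + 1) = ((k : ENNReal) + 1)⁻¹ := by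
    refine ENNReal.sub_eq_of_eq_add_rev' ENNReal.one_ne_top ?_
    rw [← one_div, ENNReal.div_add_div_same, ENNReal.div_self (by simp) (by finiteness)]
  have compl_lt : ∀ i ∈ I, μ (s i)ᶜ < ((k : ENNReal) + 1)⁻¹ := fun i hi ↦
    one_sub_eq ▸ prob_compl_lt_one_sub_of_lt_prob (hμ i hi) (hs i hi)
  apply measure_biInter_finset_pos_of_sum_compl_lt
  rw [measure_univ]
  rcases I.eq_empty_or_nonempty with rfl | hne
  · simp
  calc ∑ i ∈ I, μ (s i)ᶜ
      < ∑ _i ∈ I, ((k : ENNReal) + 1)⁻¹ := ENNReal.sum_lt_sum_of_nonempty hne compl_lt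
    _ = I.card / ((k : ENNReal) + 1) := by
        rw [Finset.sum_const, nsmul_eq_mul, div_eq_mul_inv]
    _ ≤ 1 := ENNReal.div_le_of_le_mul (by rw [one_mul]; exact_mod_cast hI)

end BiInter

theorem nonempty_iInter_of_convex_of_finrank_div_add_one_lt_prob {𝕜 E ι : Type*}
    [Field 𝕜] [LinearOrder 𝕜] [IsStrictOrderedRing 𝕜] [AddCommGroup E] [Module 𝕜 E]
    [FiniteDimensional 𝕜 E] [TopologicalSpace E] [T2Space E] [MeasurableSpace E]
    [OpensMeasurableSpace E] {μ : Measure E} [IsProbabilityMeasure μ] {F : ι → Set E}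
    (hconvex : ∀ i, Convex 𝕜 (F i)) (hcompact : ∀ i, IsCompact (F i))
    (hμ : ∀ i, (finrank 𝕜 E : ENNReal) / (finrank 𝕜 E + 1) < μ (F i)) :
    (⋂ i, F i).Nonempty :=
  Convex.helly_theorem_compact' hconvex hcompact fun _ hI ↦
    nonempty_of_measure_ne_zero (prob_biInter_finset_pos_of_div_add_one_lt hI
      (fun i _ ↦ (hcompact i).measurableSet) fun i _ ↦ hμ i).ne'

theorem stmt_16_general {E : Type*} [NormedAddCommGroup E] [NormedSpace ℝ E]
    [FiniteDimensional ℝ E] [MeasurableSpace E] [OpensMeasurableSpace E]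
    (μ : Measure E) [IsProbabilityMeasure μ] (δ : ℝ) :
    ∃ xstar : E,
      {x : E | (finrank ℝ E : ENNReal) / (finrank ℝ E + 1) < μ (Metric.closedBall x δ)} ⊆
        Metric.closedBall xstar δ := by
  have := FiniteDimensional.proper_real E
  obtain ⟨xstar, hxstar⟩ := nonempty_iInter_of_convex_of_finrank_div_add_one_lt_prob (𝕜 := ℝ)
    (ι := {x : E // (finrank ℝ E : ENNReal) / (finrank ℝ E + 1) < μ (Metric.closedBall x δ)})
    (fun x ↦ convex_closedBall x.1 δ) (fun x ↦ isCompact_closedBall x.1 δ) Subtype.property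
  exact ⟨xstar, fun x hx ↦ Metric.mem_closedBall_comm.1 (Set.mem_iInter.1 hxstar ⟨x, hx⟩)⟩

/-- the set of `δ`-typical points of a Borel probability measure
`μ` on `ℝ^n` (points `x` with `μ(B̄_δ(x)) > n/(n+1)`) is contained in a closed
ball of radius `δ`. -/
theorem stmt_16 (n : ℕ) (hn : 1 ≤ n) (δ : ℝ) (hδ : 0 < δ)
    (μ : Measure (EuclideanSpace ℝ (Fin n))) [IsProbabilityMeasure μ] :
    ∃ xstar : EuclideanSpace ℝ (Fin n),
      { x : EuclideanSpace ℝ (Fin n) |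
          (n : ENNReal) / ((n : ENNReal) + 1) < μ (Metric.closedBall x δ) } ⊆
        Metric.closedBall xstar δ := by
  simpa only [finrank_euclideanSpace_fin] using stmt_16_general μ δ
end

section
/- Let n ≥ 1 and let A ⊆ ℝ^n be nonempty and bounded. Then the Chebyshev center of A exists and is unique: there is exactly one point c* ∈ ℝ^n such that sup_{x ∈ A} ‖x − c*‖₂ = inf_{c ∈ ℝ^n} sup_{x ∈ A} ‖x − c‖₂; i.e., the function c ↦ sup_{x ∈ A} ‖x − c‖₂ attains its infimum over ℝ^n at a unique minimizer. -/
/-!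
Let `r c` be the radius of the smallest closed ball around `c` containing `A`. Apollonius's theorem
gives `r (midpoint ℝ b c) ^ 2 ≤ (r b ^ 2 + r c ^ 2) / 2 - (dist b c / 2) ^ 2`. Since the left-hand
side is at least `(⨅ x, r x) ^ 2`, two points at which `r` is nearly minimal are close to each
other. So the near-minimizers of `r` form a Cauchy filter, whose limit is the only minimizer.
-/

open Bornology Filter Set Topology

/-- `supDist A c` is the radius of the smallest closed ball around `c` containing `A`; the Chebyshev
centers of `A` are its minimizers.
As a supremum of reals, it has the junk value `0` when `A` is empty or unbounded. -/
noncomputable def supDist {X : Type*} [PseudoMetricSpace X] (A : Set X) (c : X) : ℝ :=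
  ⨆ x ∈ A, dist x c

section SupDist

variable {X : Type*} [PseudoMetricSpace X] {A : Set X} {c x : X} {r : ℝ}

theorem supDist_nonneg (A : Set X) (c : X) : 0 ≤ supDist A c :=
  Real.iSup_nonneg fun _ ↦ Real.iSup_nonneg fun _ ↦ dist_nonneg

theorem supDist_le (hr : 0 ≤ r) (h : ∀ x ∈ A, dist x c ≤ r) : supDist A c ≤ r :=
  Real.iSup_le (fun x ↦ Real.iSup_le (h x) hr) hr

theorem dist_le_supDist (hA : IsBounded A) (hx : x ∈ A) : dist x c ≤ supDist A c := by
  obtain ⟨R, hR⟩ := hA.subset_closedBall c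
  have hbdd : BddAbove (range fun y ↦ ⨆ _ : y ∈ A, dist y c) := by
    refine ⟨max R 0, forall_mem_range.2 fun y ↦ ?_⟩
    exact Real.iSup_le (fun hy ↦ le_max_of_le_left (hR hy)) (le_max_right R 0)
  simpa only [supDist, ciSup_pos hx] using le_ciSup hbdd x

theorem bddBelow_range_supDist (A : Set X) : BddBelow (range (supDist A)) :=
  ⟨0, forall_mem_range.2 (supDist_nonneg A)⟩

theorem lipschitzWith_one_supDist (hA : IsBounded A) : LipschitzWith 1 (supDist A) := by
  refine LipschitzWith.of_le_add fun b c ↦ ?_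
  refine supDist_le (add_nonneg (supDist_nonneg A c) dist_nonneg) fun x hx ↦ ?_
  calc
    dist x b ≤ dist x c + dist b c := dist_triangle_right x b c
    _ ≤ supDist A c + dist b c := by gcongr; exact dist_le_supDist hA hx

end SupDist

section WellPosed

variable {X α : Type*} [ConditionallyCompleteLinearOrder α] [TopologicalSpace α] [OrderTopology α]
  {f : X → α}

theorem comap_nhds_iInf_neBot [Nonempty X] (hbdd : BddBelow (range f)) :
    (comap f (𝓝 (⨅ x, f x))).NeBot := by
  rw [comap_neBot_iff_frequently, ← mem_closure_iff_frequently]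
  exact csInf_mem_closure (range_nonempty f) hbdd

theorem existsUnique_eq_iInf_of_forall_dist_lt [MetricSpace X] [CompleteSpace X] [Nonempty X]
    (hf : Continuous f) (hbdd : BddBelow (range f))
    (hsmall : ∀ ε > (0 : ℝ), ∃ r > ⨅ x, f x, ∀ b c, f b < r → f c < r → dist b c < ε) :
    ∃! c, f c = ⨅ x, f x := by
  have hne := comap_nhds_iInf_neBot hbdd
  have hcauchy : Cauchy (comap f (𝓝 (⨅ x, f x))) := by
    refine Metric.cauchy_iff.2 ⟨hne, fun ε hε ↦ ?_⟩
    obtain ⟨r, hr, hdist⟩ := hsmall ε hε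
    exact ⟨f ⁻¹' Iio r, preimage_mem_comap (Iio_mem_nhds hr), fun b hb c hc ↦ hdist b c hb hc⟩
  obtain ⟨c, hc⟩ := CompleteSpace.complete hcauchy
  have hmin : f c = ⨅ x, f x :=
    tendsto_nhds_unique ((hf.tendsto c).mono_left hc) tendsto_comap
  refine ⟨c, hmin, fun b hb ↦ eq_of_forall_dist_le fun ε hε ↦ ?_⟩
  obtain ⟨r, hr, hdist⟩ := hsmall ε hε
  exact (hdist b c (hb.trans_lt hr) (hmin.trans_lt hr)).le

end WellPosed

section InnerProductSpace

variable {E : Type*} [NormedAddCommGroup E] [InnerProductSpace ℝ E] {A : Set E}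

theorem supDist_midpoint_sq_le (hne : A.Nonempty) (hbdd : IsBounded A) (b c : E) :
    supDist A (midpoint ℝ b c) ^ 2 ≤
      (supDist A b ^ 2 + supDist A c ^ 2) / 2 - (dist b c / 2) ^ 2 := by
  have hpoint : ∀ x ∈ A, dist x (midpoint ℝ b c) ^ 2 ≤
      (supDist A b ^ 2 + supDist A c ^ 2) / 2 - (dist b c / 2) ^ 2 := fun x hx ↦ by
    have apollonius :=
      EuclideanGeometry.dist_sq_add_dist_sq_eq_two_mul_dist_midpoint_sq_add_half_dist_sq x b c
    have hb : dist x b ^ 2 ≤ supDist A b ^ 2 := by gcongr; exact dist_le_supDist hbdd hx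
    have hc : dist x c ^ 2 ≤ supDist A c ^ 2 := by gcongr; exact dist_le_supDist hbdd hx
    linarith
  obtain ⟨x₀, hx₀⟩ := hne
  rw [← Real.le_sqrt (supDist_nonneg A _) ((sq_nonneg _).trans (hpoint x₀ hx₀))]
  exact supDist_le (Real.sqrt_nonneg _) fun x hx ↦ Real.le_sqrt_of_sq_le (hpoint x hx)

theorem dist_lt_of_supDist_sq_lt (hne : A.Nonempty) (hbdd : IsBounded A) {b c : E} {ε : ℝ}
    (hε : 0 ≤ ε) (hb : supDist A b ^ 2 < (⨅ x, supDist A x) ^ 2 + (ε / 2) ^ 2)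
    (hc : supDist A c ^ 2 < (⨅ x, supDist A x) ^ 2 + (ε / 2) ^ 2) :
    dist b c < ε := by
  have hmid : (⨅ x, supDist A x) ^ 2 ≤ supDist A (midpoint ℝ b c) ^ 2 :=
    pow_le_pow_left₀ (Real.iInf_nonneg (supDist_nonneg A))
      (ciInf_le (bddBelow_range_supDist A) _) 2
  have hsq : dist b c ^ 2 < ε ^ 2 := by
    linarith [supDist_midpoint_sq_le hne hbdd b c]
  exact lt_of_pow_lt_pow_left₀ 2 hε hsq

theorem stmt_19_general [CompleteSpace E] (hne : A.Nonempty) (hbdd : IsBounded A) :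
    ∃! c, supDist A c = ⨅ x, supDist A x := by
  refine existsUnique_eq_iInf_of_forall_dist_lt (lipschitzWith_one_supDist hbdd).continuous
    (bddBelow_range_supDist A) fun ε hε ↦ ?_
  set ρ := ⨅ x, supDist A x
  have hlt : ∀ {p}, supDist A p < √(ρ ^ 2 + (ε / 2) ^ 2) →
      supDist A p ^ 2 < ρ ^ 2 + (ε / 2) ^ 2 := (Real.lt_sqrt (supDist_nonneg A _)).1
  refine ⟨√(ρ ^ 2 + (ε / 2) ^ 2), Real.lt_sqrt_of_sq_lt ?_, fun b c hb hc ↦ ?_⟩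
  · exact lt_add_of_pos_right _ (by positivity)
  · exact dist_lt_of_supDist_sq_lt hne hbdd hε.le (hlt hb) (hlt hc)

end InnerProductSpace

/-- every nonempty bounded set `A ⊆ ℝ^n` has a unique Chebyshev
center: a unique `c*` at which `c ↦ sup_{x ∈ A} ‖x − c‖₂` attains its infimum
over `ℝ^n`. -/
theorem stmt_19 (n : ℕ) (hn : 1 ≤ n) (A : Set (EuclideanSpace ℝ (Fin n)))
    (hA : A.Nonempty) (hbdd : Bornology.IsBounded A) :
    ∃! cstar : EuclideanSpace ℝ (Fin n),
      (⨆ x ∈ A, dist x cstar) =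
        ⨅ c : EuclideanSpace ℝ (Fin n), ⨆ x ∈ A, dist x c :=
  stmt_19_general hA hbdd
end
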